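/- Let q₀, q > 1 be integers, n₀ = q₀² + q₀ + 1 and n = q² + q + 1. Let D₀ ⊆ ℤ/n₀ℤ be a difference set containing 0 with permutations τ₁, τ₂ of D₀ fixing 0, and let D ⊆ ℤ/nℤ be a difference set containing 0 with permutations π₁, π₂ of D fixing 0. Let Γ₀ = ⟨s₀, s₁, s₂ ∣ s₀^{n₀}, s₁^{n₀}, s₂^{n₀}, s₀^{d} s₁^{τ₁(d)} s₂^{τ₂(d)} (d ∈ D₀)⟩ and Γ = ⟨σ₀, σ₁, σ₂ ∣ σ₀^{n}, σ₁^{n}, σ₂^{n}, σ₀^{d} σ₁^{π₁(d)} σ₂^{π₂(d)} (d ∈ D)⟩ be the corresponding presented groups. Assume: n₀ divides n; for every d ∈ D₀ the element (n/n₀)·d (computed in ℤ/nℤ from the integer representative of d) lies in D; and π_i((n/n₀)·d) = (n/n₀)·τ_i(d) for all d ∈ D₀ and i ∈ {1, 2}. Then there exists a group homomorphism φ : Γ₀ → Γ with φ(s_i) = σ_i^{n/n₀} for i = 0, 1, 2, and the image of φ is infinite. -/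

import Mathlib

/-- A subset `D` of `ℤ/mℤ` is a difference set if every nonzero element `a` can be written
in exactly one way as `a = d₁ − d₂` with `d₁, d₂ ∈ D`. -/
def IsDifferenceSet {m : ℕ} (D : Set (ZMod m)) : Prop :=
  ∀ a : ZMod m, a ≠ 0 → ∃! p : ZMod m × ZMod m, p.1 ∈ D ∧ p.2 ∈ D ∧ p.1 - p.2 = a

/-- The relations of Essert's presentation of a panel-regular `Ã₂`-lattice:
`σ₀ⁿ, σ₁ⁿ, σ₂ⁿ` and `σ₀^d σ₁^{π₁(d)} σ₂^{π₂(d)}` for `d ∈ D`, exponents being integer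
representatives. -/
def essertRels (n : ℕ) (D : Set (ZMod n)) (π₁ π₂ : ZMod n → ZMod n) :
    Set (FreeGroup (Fin 3)) :=
  {FreeGroup.of 0 ^ n, FreeGroup.of 1 ^ n, FreeGroup.of 2 ^ n} ∪
  {r | ∃ d ∈ D, r = FreeGroup.of 0 ^ d.val * FreeGroup.of 1 ^ (π₁ d).val *
    FreeGroup.of 2 ^ (π₂ d).val}

/-!
Essert's group `Γ` acts on the points at infinity of a building of type `Ã₂`. Such a point is
represented by exactly one ray of edges issuing from each vertex, which is encoded by the label of
its first edge and the turns, outside the difference set `D`, that it takes afterwards. A vertex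
group translates the first label of the rays issuing from its vertex. Parallel rays issuing from
the ends of an edge are the two sides of a strip of triangles, or one of them runs through the edge
into the other; this describes parallel transport along the edge, and transport around a triangle
is trivial. Hence the vertex groups, moved to a common vertex along the base triangle, satisfy the
relations of `Γ`.

If `m ∉ D`, then `σ₀ ^ m * σ₁ ^ m * σ₂ ^ m` maps all rays with first label outside `D` to rays with
first label `m`, and therefore has infinite order. Since `D ∩ -D = {0}`, this applies to `k` or
`-k` for each `k` not divisible by `n`, so the `k`-th powers of the generators generate an infinite
subgroup. For `k = n / n₀` they lie in the image of the homomorphism.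
-/

/-- The local data of a panel-regular `Ã₂`-lattice whose vertex groups are all `A`. The edges
leaving a vertex of type `i` towards type `i + 1` are labelled by `A`, and so are those leaving it
towards type `i - 1`; an edge `x` of the first kind and an edge `y` of the second span a triangle
iff `x - y ∈ D`. The triangles on a fixed edge towards type `i - 1` are thus labelled by `D`, and
`p i` is this labelling in terms of an index set `ι` shared by the three types. -/
structure TriangleSystem (A ι : Type*) [AddCommGroup A] where
  /-- The perfect difference set describing the links of the vertices. -/
  D : Set A
  existsUnique_sub : ∀ s, s ≠ 0 → ∃! x : A × A, x.1 ∈ D ∧ x.2 ∈ D ∧ x.1 - x.2 = s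
  /-- The labellings of the triangles on an edge. -/
  p : ZMod 3 → ι ≃ D
  /-- The base triangle. -/
  base : ι
  p_base : ∀ i, (p i base : A) = 0

namespace TriangleSystem

/-- A half-infinite strip of triangles, consecutive ones being adjacent and distinct. -/
@[ext]
structure Strip (ι : Type*) where
  /-- The successive triangles of the strip. -/
  triangles : Stream' ι
  ne_succ : ∀ n, triangles.get n ≠ triangles.get (n + 1)

namespace Strip

open Stream'

variable {ι : Type*}

/-- The strip without its first triangle. -/
def tail (e : Strip ι) : Strip ι := ⟨e.triangles.tail, fun n => e.ne_succ (n + 1)⟩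

/-- The strip with one more triangle in front. -/
def cons (d : ι) (e : Strip ι) (h : d ≠ e.triangles.get 0) : Strip ι where
  triangles := d :: e.triangles
  ne_succ
    | 0 => h
    | n + 1 => e.ne_succ n

lemma exists_eq_cons {d : ι} {e : Strip ι} (hd : e.triangles.get 0 = d) :
    ∃ f h, e = cons d f h := by
  subst hd
  exact ⟨e.tail, e.ne_succ 0, Strip.ext e.triangles.eta.symm⟩

end Strip

lemma sub_one_sub_one (i : ZMod 3) : i - 1 - 1 = i + 1 := by decide +revert

lemma add_one_add_one (i : ZMod 3) : i + 1 + 1 = i - 1 := by decide +revert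

variable {A ι : Type*} [AddCommGroup A] (T : TriangleSystem A ι)

lemma exists_p_eq (i : ZMod 3) {s : A} (hs : s ∈ T.D) : ∃ x, (T.p i x : A) = s :=
  ⟨(T.p i).symm ⟨s, hs⟩, by simp⟩

lemma p_inj {i : ZMod 3} {x y : ι} : (T.p i x : A) = T.p i y ↔ x = y := by
  rw [Subtype.coe_inj, (T.p i).injective.eq_iff]

lemma exists_p_sub_p_eq (i : ZMod 3) {s : A} (hs : s ≠ 0) :
    ∃ x y, x ≠ y ∧ (T.p i x : A) - T.p i y = s := by
  obtain ⟨⟨a, b⟩, ⟨ha, hb, hab⟩, -⟩ := T.existsUnique_sub s hs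
  obtain ⟨x, rfl⟩ := T.exists_p_eq i ha
  obtain ⟨y, rfl⟩ := T.exists_p_eq i hb
  refine ⟨x, y, ?_, hab⟩
  rintro rfl
  exact hs (hab ▸ sub_self _)

lemma p_sub_p_inj {i : ZMod 3} {x y x' y' : ι} (hxy : x ≠ y)
    (h : (T.p i x : A) - T.p i y = T.p i x' - T.p i y') : x = x' ∧ y = y' := by
  have huniq := (T.existsUnique_sub _ (sub_ne_zero.2 (mt T.p_inj.1 hxy))).unique
    (y₁ := (↑(T.p i x), ↑(T.p i y))) (y₂ := (↑(T.p i x'), ↑(T.p i y')))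
    ⟨(T.p i x).2, (T.p i y).2, rfl⟩ ⟨(T.p i x').2, (T.p i y').2, h.symm⟩
  simpa [T.p_inj] using huniq

/-- The turn taken at a vertex of type `i` by the side of a strip which meets the consecutive
triangles `x`, `y`, `z` there: the incoming edge lies on `x`, the outgoing edge on `z`. -/
def turn (i : ZMod 3) (x y z : ι) : A := T.p i x - T.p i y + T.p i z

lemma turn_self_left (i : ZMod 3) (x z : ι) : T.turn i x x z = T.p i z := by
  simp [turn]

lemma turn_notMem (i : ZMod 3) {x y z : ι} (hxy : x ≠ y) (hyz : y ≠ z) :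
    T.turn i x y z ∉ T.D := fun h => by
  obtain ⟨w, hw⟩ := T.exists_p_eq i h
  exact hyz (T.p_sub_p_inj hxy (x' := w) (by rw [hw, turn]; abel)).2

lemma exists_turn_eq (i : ZMod 3) (x : ι) {s : A} (hs : s ∉ T.D) :
    ∃ y z, x ≠ y ∧ y ≠ z ∧ T.turn i x y z = s := by
  have hsx : s - T.p i x ≠ 0 := fun h => hs (sub_eq_zero.1 h ▸ (T.p i x).2)
  obtain ⟨z, y, hzy, h⟩ := T.exists_p_sub_p_eq i hsx
  refine ⟨y, z, ?_, hzy.symm, ?_⟩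
  · rintro rfl
    exact hs (sub_left_injective h ▸ (T.p i z).2)
  · rw [← sub_add_cancel s (T.p i x : A), ← h, turn]
    abel

lemma turn_inj {i : ZMod 3} {x y z y' z' : ι} (hyz : y ≠ z)
    (h : T.turn i x y z = T.turn i x y' z') : y = y' ∧ z = z' := by
  refine (T.p_sub_p_inj (i := i) hyz.symm ?_).symm
  simpa only [turn, sub_add_eq_add_sub, add_sub_assoc, add_right_inj] using h

/-- Rays issuing from a vertex of a given type, representing the points at infinity of the
building: the label of the first edge, followed by the turns at the later vertices. A ray is
straight iff no two of its consecutive edges span a triangle. -/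
abbrev Ray : Type _ := A × Stream' ↥T.Dᶜ

/-- The action of a vertex group on the rays issuing from the vertex. -/
def rotate : Multiplicative A →* Equiv.Perm T.Ray where
  toFun c := (Equiv.addLeft c.toAdd).prodCongr (Equiv.refl _)
  map_one' := by ext1; simp
  map_mul' c d := Equiv.ext fun ⟨_, _⟩ => by simp [add_assoc]

lemma rotate_apply (c : A) (a : T.Ray) : T.rotate (.ofAdd c) a = (c + a.1, a.2) := rfl

/-- The side of a strip which issues from a vertex of type `i` and is met by the triangles
`0`, by `0, 1, 2`, by `2, 3, 4`, and so on. -/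
def side (i : ZMod 3) (e : Strip ι) : T.Ray :=
  (T.p i (e.triangles.get 0), fun k => ⟨T.turn (i + k + 1) (e.triangles.get (2 * k))
    (e.triangles.get (2 * k + 1)) (e.triangles.get (2 * k + 2)),
    T.turn_notMem _ (e.ne_succ _) (e.ne_succ _)⟩)

lemma coe_get_side (i : ZMod 3) (e : Strip ι) (k : ℕ) :
    ((T.side i e).2.get k : A) = T.turn (i + k + 1) (e.triangles.get (2 * k))
      (e.triangles.get (2 * k + 1)) (e.triangles.get (2 * k + 2)) := rfl

lemma side_injective (i : ZMod 3) : Function.Injective (T.side i) := by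
  intro e f h
  obtain ⟨h0, hturn⟩ := Prod.ext_iff.1 h
  have hstep : ∀ k, e.triangles.get (2 * k) = f.triangles.get (2 * k) →
      e.triangles.get (2 * k + 1) = f.triangles.get (2 * k + 1) ∧
        e.triangles.get (2 * k + 2) = f.triangles.get (2 * k + 2) := fun k hk => by
    have hk' := congrArg (fun t => (t.get k : A)) hturn
    simp only [coe_get_side, hk] at hk'
    exact T.turn_inj (e.ne_succ _) hk'
  have heven : ∀ k, e.triangles.get (2 * k) = f.triangles.get (2 * k) := fun k => by
    induction k with
    | zero => exact T.p_inj.1 h0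
    | succ k ih => exact (hstep k ih).2
  refine Strip.ext (Stream'.ext fun n => ?_)
  obtain ⟨k, rfl | rfl⟩ := n.even_or_odd'
  exacts [heven k, (hstep k (heven k)).1]

lemma exists_side_eq (i : ZMod 3) {a : T.Ray} (ha : a.1 ∈ T.D) : ∃ e, T.side i e = a := by
  obtain ⟨x, hx⟩ := T.exists_p_eq i ha
  choose mid next hmid hnext hturn using
    fun (k : ℕ) x => T.exists_turn_eq (i + k + 1) x (a.2.get k).2
  let evens : Stream' ι := Nat.rec x next
  let odds : Stream' ι := fun k => mid k (evens k)
  have heven : ∀ k, (evens ⋈ odds).get (2 * k) = evens k :=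
    fun k => Stream'.get_interleave_left k _ _
  have hodd : ∀ k, (evens ⋈ odds).get (2 * k + 1) = mid k (evens k) :=
    fun k => Stream'.get_interleave_right k _ _
  have heven_succ : ∀ k, (evens ⋈ odds).get (2 * k + 2) = next k (evens k) :=
    fun k => heven (k + 1)
  refine ⟨⟨evens ⋈ odds, fun n => ?_⟩, Prod.ext ?_ ?_⟩
  · obtain ⟨k, rfl | rfl⟩ := n.even_or_odd'
    · rw [heven, hodd]
      exact hmid k _
    · rw [hodd, heven_succ]
      exact hnext k _
  · exact (congrArg (fun y => (T.p i y : A)) (heven 0)).trans hx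
  · refine Stream'.ext fun k => Subtype.ext ?_
    rw [coe_get_side, heven, hodd, heven_succ, hturn]

open Stream' in
open Classical in
/-- Parallel transport of rays along the edge of the triangle `d` from its vertex of type `i` to
its vertex of type `i - 1`. If the given ray is a side of a strip, the parallel ray is the opposite
side. Otherwise the parallel ray reaches the given one after running through the edge of `d`. -/
noncomputable def transport (d : ι) (i : ZMod 3) (a : T.Ray) : T.Ray :=
  if h : a.1 ∈ T.D then
    let e := (T.exists_side_eq i h).choose
    (T.turn (i - 1) d (e.triangles.get 0) (e.triangles.get 1), (T.side (i - 1) e.tail).2)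
  else (T.p (i - 1) d, ⟨a.1, h⟩ :: a.2)

lemma transport_side (d : ι) (i : ZMod 3) (e : Strip ι) :
    T.transport d i (T.side i e) =
      (T.turn (i - 1) d (e.triangles.get 0) (e.triangles.get 1), (T.side (i - 1) e.tail).2) := by
  have h : (T.side i e).1 ∈ T.D := Subtype.prop _
  have he : (T.exists_side_eq i h).choose = e :=
    T.side_injective i (T.exists_side_eq i h).choose_spec
  rw [transport, dif_pos h, he]

open Stream' in
lemma transport_of_notMem (d : ι) (i : ZMod 3) {a : T.Ray} (ha : a.1 ∉ T.D) :
    T.transport d i a = (↑(T.p (i - 1) d), ⟨a.1, ha⟩ :: a.2) :=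
  dif_neg ha

variable {T} in
/-- The part of a ray issuing from its second vertex. -/
def Ray.advance (a : T.Ray) : T.Ray := (a.2.head, a.2.tail)

lemma transport_advance (d : ι) (i : ZMod 3) {a : T.Ray} (ha : a.1 = T.p (i - 1) d) :
    T.transport d i a.advance = a := by
  rw [T.transport_of_notMem d i (a := a.advance) a.2.head.2]
  exact Prod.ext ha.symm a.2.eta

lemma transport_side_cons (i : ZMod 3) {d : ι} {e : Strip ι} (h : d ≠ e.triangles.get 0) :
    T.transport d i (T.side i (e.cons d h)) = T.side (i - 1) e := by
  rw [transport_side]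
  exact Prod.ext (T.turn_self_left _ _ _) rfl

lemma transport_side_of_ne (i : ZMod 3) {d : ι} {e : Strip ι} (h : d ≠ e.triangles.get 0) :
    T.transport d i (T.side i e) = (T.side (i + 1) (e.cons d h)).advance := by
  have htype : ∀ j : ZMod 3, i + 1 + j + 1 = i - 1 + j := by decide +revert
  rw [transport_side]
  refine Prod.ext ?_ (Stream'.ext fun k => Subtype.ext ?_)
  · change _ = T.turn (i + 1 + (0 : ℕ) + 1) d (e.triangles.get 0) (e.triangles.get 1)
    rw [htype, Nat.cast_zero, add_zero]
  · change T.turn (i - 1 + k + 1) _ _ _ = T.turn (i + 1 + (k + 1 : ℕ) + 1) _ _ _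
    rw [htype, Nat.cast_succ, add_assoc]
    rfl

/-- Transport around a triangle is trivial. Of the three parallel rays at its vertices, one runs
through an edge of the triangle and continues as the second one; the first and the third are the
sides of a strip starting with the triangle. -/
lemma transport_transport_transport (d : ι) (i : ZMod 3) (a : T.Ray) :
    T.transport d (i + 1) (T.transport d (i - 1) (T.transport d i a)) = a := by
  by_cases ha : a.1 ∈ T.D
  · obtain ⟨e, rfl⟩ := T.exists_side_eq i ha
    by_cases hd : d = e.triangles.get 0
    · obtain ⟨f, hf, rfl⟩ := Strip.exists_eq_cons hd.symm
      rw [transport_side_cons, transport_side_of_ne _ _ hf, sub_add_cancel,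
        transport_advance _ _ _ (by rw [add_sub_cancel_right]; rfl)]
    · rw [transport_side_of_ne _ _ hd,
        transport_advance _ _ _ (by rw [sub_one_sub_one]; rfl), transport_side_cons,
        add_sub_cancel_right]
  · rw [transport_of_notMem _ _ _ ha]
    obtain ⟨e, he⟩ := T.exists_side_eq (i - 1) (a := (↑(T.p (i - 1) d), .cons ⟨a.1, ha⟩ a.2))
      (Subtype.prop _)
    obtain ⟨f, hf, rfl⟩ := Strip.exists_eq_cons (T.p_inj.1 (congrArg Prod.fst he))
    rw [← he, transport_side_cons, sub_one_sub_one, transport_side_of_ne _ _ hf,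
      add_one_add_one, he]
    rfl

/-- Transport of rays as a permutation. -/
noncomputable def transportPerm (d : ι) (i : ZMod 3) : Equiv.Perm T.Ray where
  toFun := T.transport d i
  invFun a := T.transport d (i + 1) (T.transport d (i - 1) a)
  left_inv := T.transport_transport_transport d i
  right_inv a := by
    simpa only [sub_one_sub_one, sub_add_cancel] using T.transport_transport_transport d (i - 1) a

lemma transportPerm_apply (d : ι) (i : ZMod 3) (a : T.Ray) :
    T.transportPerm d i a = T.transport d i a := rfl

lemma transportPerm_mul (d : ι) :
    T.transportPerm d 1 * T.transportPerm d 2 * T.transportPerm d 0 = 1 :=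
  Equiv.ext (T.transport_transport_transport d 0)

lemma transportPerm_eq_rotate_mul (d : ι) (i : ZMod 3) :
    T.transportPerm d i = T.rotate (.ofAdd (T.p (i - 1) d)) * T.transportPerm T.base i := by
  refine Equiv.ext fun a => ?_
  rw [Equiv.Perm.mul_apply, rotate_apply, transportPerm_apply, transportPerm_apply]
  by_cases ha : a.1 ∈ T.D
  · obtain ⟨e, rfl⟩ := T.exists_side_eq i ha
    simp [transport_side, turn, p_base, sub_eq_add_neg, add_assoc]
  · simp [transport_of_notMem _ _ _ ha, p_base]

/-- The transport from the base vertex of type `i` to the base vertex of type `0`. -/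
noncomputable def frame : Fin 3 → Equiv.Perm T.Ray :=
  ![1, T.transportPerm T.base 1, T.transportPerm T.base 1 * T.transportPerm T.base 2]

/-- The action of the base vertex group of type `i` on the points at infinity, in terms of the
rays issuing from the base vertex of type `0`. -/
noncomputable def vertexHom (i : Fin 3) : Multiplicative A →* Equiv.Perm T.Ray :=
  (MulAut.conj (T.frame i)).toMonoidHom.comp T.rotate

lemma vertexHom_mul (x y z : Multiplicative A) :
    T.vertexHom 0 x * T.vertexHom 1 y * T.vertexHom 2 z =
      T.rotate x * T.transportPerm T.base 1 * (T.rotate y * T.transportPerm T.base 2) *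
        (T.rotate z * T.transportPerm T.base 0) := by
  have h := eq_inv_of_mul_eq_one_right (T.transportPerm_mul T.base)
  rw [h]
  simp [vertexHom, frame, mul_assoc]

lemma vertexHom_triangle (d : ι) :
    T.vertexHom 0 (.ofAdd (T.p 0 d)) * T.vertexHom 1 (.ofAdd (T.p 1 d)) *
      T.vertexHom 2 (.ofAdd (T.p 2 d)) = 1 := by
  rw [vertexHom_mul, ← T.transportPerm_mul d]
  simp only [T.transportPerm_eq_rotate_mul d]
  rfl

lemma fst_rotate_mul_transportPerm_base (c : A) (i : ZMod 3) {a : T.Ray} (ha : a.1 ∉ T.D) :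
    ((T.rotate (.ofAdd c) * T.transportPerm T.base i) a).1 = c := by
  rw [Equiv.Perm.mul_apply, rotate_apply, transportPerm_apply, transport_of_notMem _ _ _ ha,
    p_base, add_zero]

/-- The product sends the rays with first label outside `D` to rays with first label `x`, so that
none of its powers fixes a ray with first label `w`. -/
lemma not_isOfFinOrder_vertexHom_mul {w x y z : A} (hw : w ∉ T.D) (hx : x ∉ T.D) (hy : y ∉ T.D)
    (hz : z ∉ T.D) (hxw : x ≠ w) :
    ¬ IsOfFinOrder (T.vertexHom 0 (.ofAdd x) * T.vertexHom 1 (.ofAdd y) *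
      T.vertexHom 2 (.ofAdd z)) := by
  set g := T.vertexHom 0 (.ofAdd x) * T.vertexHom 1 (.ofAdd y) * T.vertexHom 2 (.ofAdd z) with hg
  have hfst : ∀ a : T.Ray, a.1 ∉ T.D → (g a).1 = x := fun a ha => by
    rw [hg, vertexHom_mul, Equiv.Perm.mul_apply, Equiv.Perm.mul_apply]
    have hz' := T.fst_rotate_mul_transportPerm_base z 0 ha
    have hy' := T.fst_rotate_mul_transportPerm_base y 2 (hz'.symm ▸ hz)
    exact T.fst_rotate_mul_transportPerm_base x 1 (hy'.symm ▸ hy)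
  let a : T.Ray := (w, .const ⟨w, hw⟩)
  have hpow : ∀ k, ((g ^ (k + 1)) a).1 = x := fun k => by
    induction k with
    | zero => simpa using hfst a hw
    | succ k ih =>
      rw [pow_succ', Equiv.Perm.mul_apply]
      exact hfst _ (ih ▸ hx)
  rw [isOfFinOrder_iff_pow_eq_one]
  rintro ⟨k, hk, hgk⟩
  have hak := hpow (k - 1)
  rw [Nat.sub_add_cancel hk, hgk] at hak
  exact hxw hak.symm

end TriangleSystem

namespace IsDifferenceSet

variable {n : ℕ} {D : Set (ZMod n)}

lemma notMem_or_neg_notMem (hD : IsDifferenceSet D) (h0D : 0 ∈ D) {s : ZMod n} (hs : s ≠ 0) :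
    s ∉ D ∨ -s ∉ D := by
  by_contra! ⟨hpos, hneg⟩
  have huniq := (hD s hs).unique (y₁ := (s, 0)) (y₂ := (0, -s))
    ⟨hpos, h0D, sub_zero s⟩ ⟨h0D, hneg, by simp⟩
  exact hs (congrArg Prod.fst huniq)

lemma exists_notMem_ne (hD : IsDifferenceSet D) (h0D : 0 ∈ D) (hn : 3 < n) (x : ZMod n) :
    ∃ w, w ∉ D ∧ x ≠ w := by
  have : NeZero n := ⟨by lia⟩
  have hcard : ({0, x, -x} : Finset (ZMod n)).card < Fintype.card (ZMod n) := by
    rw [ZMod.card]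
    exact Finset.card_le_three.trans_lt hn
  obtain ⟨s, -, hs⟩ := Finset.exists_mem_notMem_of_card_lt_card hcard
  simp only [Finset.mem_insert, Finset.mem_singleton, not_or] at hs
  obtain ⟨hs0, hsx, hsnx⟩ := hs
  obtain hpos | hneg := hD.notMem_or_neg_notMem h0D hs0
  · exact ⟨s, hpos, Ne.symm hsx⟩
  · exact ⟨-s, hneg, fun h => hsnx (neg_eq_iff_eq_neg.1 h.symm)⟩

/-- The local data of Essert's lattice: a triangle labelled `d` at its vertex of type `0` is
labelled `π₁ d` and `π₂ d` at its vertices of types `1` and `2`. -/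
noncomputable def triangleSystem (hD : IsDifferenceSet D) (h0D : 0 ∈ D) {π₁ π₂ : ZMod n → ZMod n}
    (hπ₁ : Set.BijOn π₁ D D) (hπ₂ : Set.BijOn π₂ D D) (hπ₁0 : π₁ 0 = 0) (hπ₂0 : π₂ 0 = 0) :
    TriangleSystem (ZMod n) D where
  D := D
  existsUnique_sub := hD
  p := ![Equiv.refl D, hπ₁.equiv π₁, hπ₂.equiv π₂]
  base := ⟨0, h0D⟩
  p_base i := by
    fin_cases i
    exacts [rfl, hπ₁0, hπ₂0]

end IsDifferenceSet

/-- Essert's panel-regular lattice, by its presentation. -/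
abbrev EssertGroup (n : ℕ) (D : Set (ZMod n)) (π₁ π₂ : ZMod n → ZMod n) : Type :=
  PresentedGroup (essertRels n D π₁ π₂)

namespace EssertGroup

open PresentedGroup (of)

variable {n : ℕ} {D : Set (ZMod n)} {π₁ π₂ : ZMod n → ZMod n}

lemma lift_eq_one {G : Type*} [Group G] {f : Fin 3 → G} (hpow : ∀ i, f i ^ n = 1)
    (htriangle : ∀ d ∈ D, f 0 ^ d.val * f 1 ^ (π₁ d).val * f 2 ^ (π₂ d).val = 1) :
    ∀ r ∈ essertRels n D π₁ π₂, FreeGroup.lift f r = 1 := by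
  rintro r ((rfl | rfl | rfl) | ⟨d, hd, rfl⟩)
  · simpa using hpow 0
  · simpa using hpow 1
  · simpa using hpow 2
  · simpa using htriangle d hd

lemma of_pow_eq_one (i : Fin 3) : (of i : EssertGroup n D π₁ π₂) ^ n = 1 := by
  refine PresentedGroup.one_of_mem (x := FreeGroup.of i ^ n) (Or.inl ?_)
  fin_cases i <;> simp

lemma of_pow_val_natCast (i : Fin 3) (m : ℕ) :
    (of i : EssertGroup n D π₁ π₂) ^ (m : ZMod n).val = of i ^ m := by
  rw [ZMod.val_natCast, ← pow_eq_pow_mod m (of_pow_eq_one i)]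

lemma of_pow_val_mul_eq_one {d : ZMod n} (hd : d ∈ D) :
    (of 0 : EssertGroup n D π₁ π₂) ^ d.val * of 1 ^ (π₁ d).val * of 2 ^ (π₂ d).val = 1 :=
  PresentedGroup.one_of_mem (x := FreeGroup.of 0 ^ d.val * FreeGroup.of 1 ^ (π₁ d).val *
    FreeGroup.of 2 ^ (π₂ d).val) (Or.inr ⟨d, hd, rfl⟩)

lemma exists_hom_of_pow {n₀ : ℕ} {D₀ : Set (ZMod n₀)} {τ₁ τ₂ : ZMod n₀ → ZMod n₀} {k : ℕ}
    (hk : n ∣ k * n₀) (hD : ∀ d ∈ D₀, ((k * d.val : ℕ) : ZMod n) ∈ D)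
    (h₁ : ∀ d ∈ D₀, π₁ ((k * d.val : ℕ) : ZMod n) = ((k * (τ₁ d).val : ℕ) : ZMod n))
    (h₂ : ∀ d ∈ D₀, π₂ ((k * d.val : ℕ) : ZMod n) = ((k * (τ₂ d).val : ℕ) : ZMod n)) :
    ∃ φ : EssertGroup n₀ D₀ τ₁ τ₂ →* EssertGroup n D π₁ π₂, ∀ i, φ (of i) = of i ^ k := by
  have hrel : ∀ r ∈ essertRels n₀ D₀ τ₁ τ₂,
      FreeGroup.lift (fun i => (of i : EssertGroup n D π₁ π₂) ^ k) r = 1 := by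
    refine lift_eq_one (fun i => ?_) fun d hd => ?_
    · obtain ⟨l, hl⟩ := hk
      rw [← pow_mul, hl, pow_mul, of_pow_eq_one, one_pow]
    · have h := of_pow_val_mul_eq_one (π₁ := π₁) (π₂ := π₂) (hD d hd)
      simpa only [h₁ d hd, h₂ d hd, of_pow_val_natCast, pow_mul] using h
  exact ⟨PresentedGroup.toGroup hrel, fun i => PresentedGroup.toGroup.of hrel⟩

lemma not_isOfFinOrder_of_zpow_mul (hn : 3 < n) (hD : IsDifferenceSet D) (h0D : 0 ∈ D)
    (hπ₁ : Set.BijOn π₁ D D) (hπ₂ : Set.BijOn π₂ D D) (hπ₁0 : π₁ 0 = 0) (hπ₂0 : π₂ 0 = 0)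
    {m : ℤ} (hm : (m : ZMod n) ∉ D) :
    ¬ IsOfFinOrder ((of 0 : EssertGroup n D π₁ π₂) ^ m * of 1 ^ m * of 2 ^ m) := by
  have : NeZero n := ⟨by lia⟩
  let T := hD.triangleSystem h0D hπ₁ hπ₂ hπ₁0 hπ₂0
  have hval : ∀ i (x : ZMod n), T.vertexHom i (.ofAdd 1) ^ x.val = T.vertexHom i (.ofAdd x) :=
    fun i x => by rw [← map_pow, ← ofAdd_nsmul, nsmul_one, ZMod.natCast_zmod_val]
  have hrel : ∀ r ∈ essertRels n D π₁ π₂,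
      FreeGroup.lift (fun i => T.vertexHom i (.ofAdd 1)) r = 1 := by
    refine lift_eq_one (fun i => ?_) fun d hd => ?_
    · rw [← map_pow, ← ofAdd_nsmul, nsmul_one, ZMod.natCast_self, ofAdd_zero, map_one]
    · simp only [hval]
      exact T.vertexHom_triangle ⟨d, hd⟩
  obtain ⟨w, hw, hmw⟩ := hD.exists_notMem_ne h0D hn m
  intro hfin
  refine T.not_isOfFinOrder_vertexHom_mul hw hm hm hm hmw ?_
  simpa only [map_mul, map_zpow, PresentedGroup.toGroup.of, ← ofAdd_zsmul, zsmul_one,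
    ← map_zpow (T.vertexHom _)] using (PresentedGroup.toGroup hrel).isOfFinOrder hfin

lemma infinite_of_forall_of_pow_mem (hn : 3 < n) (hD : IsDifferenceSet D) (h0D : 0 ∈ D)
    (hπ₁ : Set.BijOn π₁ D D) (hπ₂ : Set.BijOn π₂ D D) (hπ₁0 : π₁ 0 = 0) (hπ₂0 : π₂ 0 = 0)
    {k : ℕ} (hk : ¬ n ∣ k) {H : Subgroup (EssertGroup n D π₁ π₂)} (hH : ∀ i, of i ^ k ∈ H) :
    Infinite H := by
  obtain ⟨m, hkm, hm⟩ : ∃ m : ℤ, (k : ℤ) ∣ m ∧ (m : ZMod n) ∉ D := by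
    obtain h | h := hD.notMem_or_neg_notMem h0D (mt (ZMod.natCast_eq_zero_iff k n).1 hk)
    · exact ⟨k, dvd_rfl, by simpa using h⟩
    · exact ⟨-k, dvd_neg.2 dvd_rfl, by simpa using h⟩
  have hmem : ∀ i, of i ^ m ∈ H := fun i => by
    obtain ⟨l, rfl⟩ := hkm
    rw [zpow_mul, zpow_natCast]
    exact H.zpow_mem (hH i) l
  have hinf := not_isOfFinOrder_of_zpow_mul hn hD h0D hπ₁ hπ₂ hπ₁0 hπ₂0 hm
  by_contra hfin
  rw [not_infinite_iff_finite] at hfin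
  exact hinf (Submonoid.isOfFinOrder_coe.2
    (isOfFinOrder_of_finite (⟨_, mul_mem (mul_mem (hmem 0) (hmem 1)) (hmem 2)⟩ : H)))

end EssertGroup

theorem exists_hom_between_panelRegular_lattices_general
    {n₀ n : ℕ} (hn₀ : n₀ ≠ 1) (hn : 3 < n) {D₀ : Set (ZMod n₀)}
    {D : Set (ZMod n)} (hD : IsDifferenceSet D) (h0D : (0 : ZMod n) ∈ D)
    {τ₁ τ₂ : ZMod n₀ → ZMod n₀} {π₁ π₂ : ZMod n → ZMod n}
    (hπ₁ : Set.BijOn π₁ D D) (hπ₂ : Set.BijOn π₂ D D)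
    (hπ₁0 : π₁ 0 = 0) (hπ₂0 : π₂ 0 = 0)
    (hdvd : n₀ ∣ n)
    (hDD : ∀ d ∈ D₀, ((n / n₀ * d.val : ℕ) : ZMod n) ∈ D)
    (hcompat₁ : ∀ d ∈ D₀,
      π₁ ((n / n₀ * d.val : ℕ) : ZMod n) = ((n / n₀ * (τ₁ d).val : ℕ) : ZMod n))
    (hcompat₂ : ∀ d ∈ D₀,
      π₂ ((n / n₀ * d.val : ℕ) : ZMod n) = ((n / n₀ * (τ₂ d).val : ℕ) : ZMod n)) :
    ∃ φ : EssertGroup n₀ D₀ τ₁ τ₂ →* EssertGroup n D π₁ π₂,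
      (∀ i : Fin 3, φ (PresentedGroup.of i) = PresentedGroup.of i ^ (n / n₀)) ∧
      Infinite ↥φ.range := by
  have hn₀_pos : 0 < n₀ := Nat.pos_of_dvd_of_pos hdvd (by lia)
  have hmul : n ∣ n / n₀ * n₀ := (Nat.div_mul_cancel hdvd).symm.dvd
  have hnot : ¬ n ∣ n / n₀ := Nat.not_dvd_of_pos_of_lt
    (Nat.div_pos (Nat.le_of_dvd (by lia) hdvd) hn₀_pos) (Nat.div_lt_self (by lia) (by lia))
  obtain ⟨φ, hφ⟩ := EssertGroup.exists_hom_of_pow hmul hDD hcompat₁ hcompat₂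
  exact ⟨φ, hφ, EssertGroup.infinite_of_forall_of_pow_mem hn hD h0D hπ₁ hπ₂ hπ₁0 hπ₂0 hnot
    fun i => ⟨_, hφ i⟩⟩

/-- Under the compatibility hypotheses between the difference sets `D₀ ⊆ ℤ/n₀ℤ` and
`D ⊆ ℤ/nℤ` and the permutations `τᵢ`, `πᵢ`, the assignments `sᵢ ↦ σᵢ^{n/n₀}` extend to a
group homomorphism between the corresponding Essert presented groups, with infinite image. -/
theorem exists_hom_between_panelRegular_lattices
    (q₀ q n₀ n : ℕ) (hq₀ : 1 < q₀) (hq : 1 < q)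
    (hn₀ : n₀ = q₀ ^ 2 + q₀ + 1) (hn : n = q ^ 2 + q + 1)
    (D₀ : Set (ZMod n₀)) (hD₀ : IsDifferenceSet D₀) (h0D₀ : (0 : ZMod n₀) ∈ D₀)
    (D : Set (ZMod n)) (hD : IsDifferenceSet D) (h0D : (0 : ZMod n) ∈ D)
    (τ₁ τ₂ : ZMod n₀ → ZMod n₀)
    (hτ₁ : Set.BijOn τ₁ D₀ D₀) (hτ₂ : Set.BijOn τ₂ D₀ D₀)
    (hτ₁0 : τ₁ 0 = 0) (hτ₂0 : τ₂ 0 = 0)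
    (π₁ π₂ : ZMod n → ZMod n)
    (hπ₁ : Set.BijOn π₁ D D) (hπ₂ : Set.BijOn π₂ D D)
    (hπ₁0 : π₁ 0 = 0) (hπ₂0 : π₂ 0 = 0)
    (hdvd : n₀ ∣ n)
    (hDD : ∀ d ∈ D₀, ((n / n₀ * d.val : ℕ) : ZMod n) ∈ D)
    (hcompat₁ : ∀ d ∈ D₀,
      π₁ ((n / n₀ * d.val : ℕ) : ZMod n) = ((n / n₀ * (τ₁ d).val : ℕ) : ZMod n))
    (hcompat₂ : ∀ d ∈ D₀,
      π₂ ((n / n₀ * d.val : ℕ) : ZMod n) = ((n / n₀ * (τ₂ d).val : ℕ) : ZMod n)) :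
    ∃ φ : PresentedGroup (essertRels n₀ D₀ τ₁ τ₂) →* PresentedGroup (essertRels n D π₁ π₂),
      (∀ i : Fin 3, φ (PresentedGroup.of i) = PresentedGroup.of i ^ (n / n₀)) ∧
      Infinite ↥φ.range := by
  exact exists_hom_between_panelRegular_lattices_general (by lia) (by nlinarith) hD h0D hπ₁
    hπ₂ hπ₁0 hπ₂0 hdvd hDD hcompat₁ hcompat₂
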